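/- arXiv:1805.11131 — 2 statements merged into one kernel-verified Lean document; each statement's English description precedes it below -/
import Mathlib

section
/- Let H be an infinite dimensional Hilbert space. For every 0 < ε ≤ 1 there exist bounded operators D, X ∈ B(H) with ‖[D,X] - 1‖ ≤ ε and ‖D‖·‖X‖ ≤ C·ε^{-2} for an absolute constant C. -/
/-- The image of a Hilbert basis under an injective relabelling gives an isometry. -/
theorem exists_shift {H ι : Type} [NormedAddCommGroup H] [InnerProductSpace ℂ H] [CompleteSpace H]
    (b : HilbertBasis ι ℂ H) (f : ι → ι) (hf : Function.Injective f) :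
    ∃ u : H →L[ℂ] H, star u * u = 1 ∧ ‖u‖ ≤ 1 ∧ ∀ i, u (b i) = b (f i) := by
  classical
  have ho : Orthonormal ℂ (b ∘ f) := b.orthonormal.comp f hf
  let L : H →ₗᵢ[ℂ] H := ho.orthogonalFamily.linearIsometry.comp b.repr.toLinearIsometry
  refine ⟨L.toContinuousLinearMap, ?_, L.norm_toContinuousLinearMap_le, ?_⟩
  · rw [ContinuousLinearMap.star_eq_adjoint]
    exact (ContinuousLinearMap.norm_map_iff_adjoint_comp_self _).1 (fun x => L.norm_map x)
  · intro i
    change ho.orthogonalFamily.linearIsometry (b.repr (b i)) = b (f i)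
    rw [b.repr_self]
    refine (ho.orthogonalFamily.linearIsometry_apply_single _).trans ?_
    simp

theorem exists_cuntz (H : Type) [NormedAddCommGroup H] [InnerProductSpace ℂ H] [CompleteSpace H]
    (hH : ¬ FiniteDimensional ℂ H) :
    ∃ u v : H →L[ℂ] H, star u * u = 1 ∧ star v * v = 1 ∧ star u * v = 0 ∧ star v * u = 0 ∧
      u * star u + v * star v = 1 ∧ ‖u‖ ≤ 1 ∧ ‖v‖ ≤ 1 := by
  classical
  obtain ⟨w, b, -⟩ := exists_hilbertBasis ℂ H
  have hinf : Infinite w := by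
    by_contra hfin
    rw [not_infinite_iff_finite] at hfin
    apply hH
    have h1 := b.dense_span
    have hfd : FiniteDimensional ℂ (Submodule.span ℂ (Set.range b)) :=
      FiniteDimensional.span_of_finite ℂ (Set.finite_range b)
    rw [(Submodule.closed_of_finiteDimensional _).submodule_topologicalClosure_eq] at h1
    rw [h1] at hfd
    exact Module.finite_def.2 (Module.Finite.iff_fg.1 hfd)
  obtain ⟨e⟩ : Nonempty (w ⊕ w ≃ w) := by
    rw [← Cardinal.eq]
    simp [Cardinal.add_eq_self (Cardinal.aleph0_le_mk w)]
  obtain ⟨u, hu, hun, hub⟩ := exists_shift b (fun i => e (Sum.inl i))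
    (e.injective.comp Sum.inl_injective)
  obtain ⟨v, hv, hvn, hvb⟩ := exists_shift b (fun i => e (Sum.inr i))
    (e.injective.comp Sum.inr_injective)
  have hd : Dense ((Submodule.span ℂ (Set.range b) : Submodule ℂ H) : Set H) :=
    (Submodule.dense_iff_topologicalClosure_eq_top).2 b.dense_span
  have huv : star u * v = 0 := by
    refine ContinuousLinearMap.ext_on hd ?_
    rintro _ ⟨i, rfl⟩
    apply b.repr.injective
    ext j
    rw [b.repr_apply_apply, ContinuousLinearMap.star_eq_adjoint, mul_apply_eq_comp,
      ContinuousLinearMap.adjoint_inner_right, hub, hvb, b.orthonormal.2]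
    · simp
    · simp
  have hvu : star v * u = 0 := by
    have := congrArg star huv
    simpa using this
  refine ⟨u, v, hu, hv, huv, hvu, ?_, hun, hvn⟩
  refine ContinuousLinearMap.ext_on hd ?_
  rintro _ ⟨k, rfl⟩
  obtain ⟨s, rfl⟩ := e.surjective k
  rcases s with i | i
  · have h : (u * star u + v * star v) * u = 1 * u := by
      rw [add_mul, mul_assoc, mul_assoc, hu, hvu]; simp
    have := congrArg (fun T : H →L[ℂ] H => T (b i)) h
    simpa only [mul_apply_eq_comp, hub] using this
  · have h : (u * star u + v * star v) * v = 1 * v := by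
      rw [add_mul, mul_assoc, mul_assoc, hv, huv]; simp
    have := congrArg (fun T : H →L[ℂ] H => T (b i)) h
    simpa only [mul_apply_eq_comp, hvb] using this

/-- The commutator computation from the Cuntz relations. -/
theorem cuntz_comm {A : Type} [Ring A] [Algebra ℂ A] (u v p q : A) (d : ℂ) (hd : d ≠ 0)
    (h1 : p * u = 1) (h2 : q * v = 1) (h3 : p * v = 0) (h4 : q * u = 0)
    (h5 : u * p + v * q = 1) :
    (d • (u * q * q) + d⁻¹ • (v * p) + v * p * q) *
      ((2 : ℂ) • (u * u * p) + d • (u * q) + (2 * d⁻¹) • (v * v * p) + (2 : ℂ) • (v * u * q)) -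
    ((2 : ℂ) • (u * u * p) + d • (u * q) + (2 * d⁻¹) • (v * v * p) + (2 : ℂ) • (v * u * q)) *
      (d • (u * q * q) + d⁻¹ • (v * p) + v * p * q) - 1 =
    d • (-((2 : ℂ) • (u * u * q * q)) - u * p * q) := by
  have g1 : ∀ x, p * (u * x) = x := fun x => by rw [← mul_assoc, h1, one_mul]
  have g2 : ∀ x, q * (v * x) = x := fun x => by rw [← mul_assoc, h2, one_mul]
  have g3 : ∀ x, p * (v * x) = 0 := fun x => by rw [← mul_assoc, h3, zero_mul]
  have g4 : ∀ x, q * (u * x) = 0 := fun x => by rw [← mul_assoc, h4, zero_mul]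
  have e1 : v * (v * (q * q)) = v * q - v * (u * (p * q)) := by
    have : v * ((u * p + v * q) * q) = v * q := by rw [h5, one_mul]
    rw [← this]; noncomm_ring
  have e2 : (1 : A) = u * p + v * q := h5.symm
  rw [e2]
  simp only [mul_add, add_mul, smul_mul_assoc, mul_smul_comm, mul_assoc, g1, g2, g3, g4,
    mul_zero, smul_zero, add_zero, zero_add, e1]
  match_scalars <;> field_simp <;> ring

theorem brown_pearcy_bound : ∃ C : ℝ, 0 < C ∧
    ∀ (H : Type) [NormedAddCommGroup H] [InnerProductSpace ℂ H] [CompleteSpace H],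
      ¬ FiniteDimensional ℂ H → ∀ ε : ℝ, 0 < ε → ε ≤ 1 →
        ∃ D X : H →L[ℂ] H, ‖D * X - X * D - 1‖ ≤ ε ∧ ‖D‖ * ‖X‖ ≤ C * ε⁻¹ ^ 2 := by
  refine ⟨189, by norm_num, ?_⟩
  intro H _ _ _ hH ε hε hε1
  obtain ⟨u, v, h1, h2, h3, h4, h5, hu, hv⟩ := exists_cuntz H hH
  have hp : ‖star u‖ ≤ 1 := by rwa [norm_star]
  have hq : ‖star v‖ ≤ 1 := by rwa [norm_star]
  generalize star u = p at *
  generalize star v = q at *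
  have m2 : ∀ {a b : H →L[ℂ] H}, ‖a‖ ≤ 1 → ‖b‖ ≤ 1 → ‖a * b‖ ≤ 1 := fun {a b} ha hb =>
    (norm_mul_le a b).trans (mul_le_one₀ ha (norm_nonneg _) hb)
  have sm : ∀ (c : ℂ) {a : H →L[ℂ] H}, ‖a‖ ≤ 1 → ‖c • a‖ ≤ ‖c‖ := fun c {a} ha => by
    rw [norm_smul]; exact mul_le_of_le_one_right (norm_nonneg _) ha
  obtain ⟨r, hr⟩ : ∃ r : ℝ, r = ε / 3 := ⟨_, rfl⟩
  have hr0 : 0 < r := by rw [hr]; positivity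
  have hr1 : r ≤ 1 := by rw [hr]; linarith
  have hri : 1 ≤ r⁻¹ := (one_le_inv₀ hr0).2 hr1
  have hd : (r : ℂ) ≠ 0 := by exact_mod_cast hr0.ne'
  have nd : ‖(r : ℂ)‖ = r := by simp [abs_of_pos hr0]
  have ndi : ‖(r : ℂ)⁻¹‖ = r⁻¹ := by rw [norm_inv, nd]
  have nd2 : ‖2 * (r : ℂ)⁻¹‖ = 2 * r⁻¹ := by rw [norm_mul, ndi]; simp
  have n2 : ‖(2 : ℂ)‖ = 2 := by simp
  refine ⟨_, _, (congrArg norm (cuntz_comm u v p q (r : ℂ) hd h1 h2 h3 h4 h5)).le.trans ?_, ?_⟩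
  · rw [norm_smul, nd]
    have a1 := sm 2 (m2 (m2 (m2 hu hu) hq) hq)
    have a2 := m2 (m2 hu hp) hq
    have a3 := norm_sub_le (-((2 : ℂ) • (u * u * q * q))) (u * p * q)
    rw [norm_neg] at a3
    rw [n2] at a1
    calc _ ≤ r * 3 := by gcongr; linarith
      _ = ε := by rw [hr]; ring
  · have b1 := sm r (m2 (m2 hu hq) hq)
    have b2 := sm (r : ℂ)⁻¹ (m2 hv hp)
    have b3 := m2 (m2 hv hp) hq
    have c1 := sm 2 (m2 (m2 hu hu) hp)
    have c2 := sm r (m2 hu hq)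
    have c3 := sm (2 * (r : ℂ)⁻¹) (m2 (m2 hv hv) hp)
    have c4 := sm 2 (m2 (m2 hv hu) hq)
    rw [nd] at b1 c2
    rw [ndi] at b2
    rw [nd2] at c3
    rw [n2] at c1 c4
    have hD := norm_add₃_le.trans (add_le_add (add_le_add b1 b2) b3)
    have hX := norm_add₄_le.trans (add_le_add (add_le_add (add_le_add c1 c2) c3) c4)
    calc _ ≤ (3 * r⁻¹) * (7 * r⁻¹) :=
          mul_le_mul (hD.trans (by linarith)) (hX.trans (by linarith)) (norm_nonneg _)
            (by positivity)
      _ = 189 * ε⁻¹ ^ 2 := by rw [hr]; field_simp; norm_num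
end

section
/- Let H be an infinite dimensional Hilbert space. For every 0 < ε ≤ 1/2 there exist bounded operators D, X ∈ B(H) with ‖[D,X] - 1‖ ≤ ε and ‖D‖·‖X‖ ≤ C·(log(1/ε))⁵ for an absolute constant C. -/
open Finset

section alg
variable {A : Type*} [Ring A] {m : ℕ} {T T' : ℕ → A}

theorem cc_pick (hT : ∀ i ≤ m, ∀ j ≤ m, T' i * T j = if i = j then 1 else 0) (g : ℕ → A) (j : ℕ) (hj : j ≤ m) :
    (∑ i ∈ range (m+1), g i * T' i) * T j = g j := by
  rw [Finset.sum_mul, Finset.sum_eq_single j]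
  · rw [mul_assoc, hT j hj j hj]; simp
  · intro i hi hij
    rw [mul_assoc, hT i (by simp at hi; omega) j hj]; simp [hij]
  · intro h; simp at h; omega

theorem cc_alg (hT : ∀ i ≤ m, ∀ j ≤ m, T' i * T j = if i = j then 1 else 0)
    (hsum : ∑ i ∈ range (m+1), T i * T' i = 1) (u v : A) (b : ℕ → A) (X D W Θu Θv : A)
    (hX : X = (∑ i ∈ range m, T (i+1) * T' i) + (∑ i ∈ range (m+1), T i * b i) * T' m)
    (hW : W = ∑ i ∈ range m, ((i+1 : ℕ) : A) * T i * T' (i+1))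
    (hu : Θu = ∑ i ∈ range (m+1), T i * u * T' i)
    (hv : Θv = ∑ i ∈ range (m+1), T i * v * T' i)
    (hD : D = W + Θv + X * Θu) :
    D * X - X * D - 1 = (∑ i ∈ range (m+1), T i *
      ((if i < m then ((i+1 : ℕ) : A) * b (i+1) else 0) + (v * b i - b i * v)
        + (if 1 ≤ i then u * b (i-1) - b (i-1) * u else 0)
        + b i * (u * b m - b m * u) - (if i = m then ((m+1 : ℕ) : A) else 0))) * T' m := by
  have hXT : ∀ j < m, X * T j = T (j+1) := by
    intro j hj
    rw [hX, add_mul, mul_assoc _ (T' m), hT m le_rfl j hj.le, if_neg (by omega), mul_zero, add_zero,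
      Finset.sum_mul, Finset.sum_eq_single j]
    · rw [mul_assoc, hT j hj.le j hj.le]; simp
    · intro i hi hij
      rw [mul_assoc, hT i (by simp at hi; omega) j hj.le]; simp [hij]
    · intro h; simp at h; omega
  have hXm : X * T m = ∑ i ∈ range (m+1), T i * b i := by
    rw [hX, add_mul, mul_assoc _ (T' m), hT m le_rfl m le_rfl, if_pos rfl, mul_one, Finset.sum_mul,
      Finset.sum_eq_zero, zero_add]
    intro i hi
    simp at hi
    rw [mul_assoc, hT i (by omega) m le_rfl, if_neg (by omega), mul_zero]
  have hW0 : W * T 0 = 0 := by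
    rw [hW, Finset.sum_mul, Finset.sum_eq_zero]
    intro i hi
    simp at hi
    rw [mul_assoc, hT (i+1) (by omega) 0 (by omega), if_neg (by omega), mul_zero]
  have hWT : ∀ j < m, W * T (j+1) = ((j+1 : ℕ) : A) * T j := by
    intro j hj
    rw [hW, Finset.sum_mul, Finset.sum_eq_single j]
    · rw [mul_assoc, hT (j+1) (by omega) (j+1) (by omega)]; simp
    · intro i hi hij
      simp at hi
      rw [mul_assoc, hT (i+1) (by omega) (j+1) (by omega)]; simp [hij]
    · intro h; simp at h; omega
  have hXW : ∀ j ≤ m, X * (W * T j) = (j : A) * T j := by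
    intro j hj
    rcases j with _ | j
    · simp [hW0]
    · rw [hWT j (by omega), ← mul_assoc, ← Nat.cast_comm, mul_assoc, hXT j (by omega)]
  have hvT : ∀ j ≤ m, Θv * T j = T j * v := fun j hj => by
    rw [hv]; exact cc_pick hT _ j hj
  have huT : ∀ j ≤ m, Θu * T j = T j * u := fun j hj => by
    rw [hu]; exact cc_pick hT _ j hj
  have hDT : ∀ j ≤ m, D * T j = W * T j + T j * v + X * T j * u := by
    intro j hj
    rw [hD, add_mul, add_mul, hvT j hj, mul_assoc X, huT j hj, mul_assoc]
  have hsumX : ∀ g : ℕ → A, ∑ i ∈ range (m+1), X * T i * g i =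
      ∑ i ∈ range (m+1), T i * ((if 1 ≤ i then g (i-1) else 0) + b i * g m) := by
    intro g
    rw [Finset.sum_range_succ, hXm, Finset.sum_mul]
    simp only [mul_add, Finset.sum_add_distrib]
    rw [Finset.sum_range_succ' (fun i => T i * (if 1 ≤ i then g (i-1) else 0))]
    simp only [mul_assoc]
    simp
    apply Finset.sum_congr rfl
    intro i hi
    simp at hi
    rw [← mul_assoc, hXT i hi]
  have key : ∀ E F : A, (∀ j ≤ m, E * T j = F * T j) → E = F := by
    intro E F h
    calc E = E * ∑ i ∈ range (m+1), T i * T' i := by rw [hsum, mul_one]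
      _ = F * ∑ i ∈ range (m+1), T i * T' i := by
        rw [Finset.mul_sum, Finset.mul_sum]
        apply Finset.sum_congr rfl
        intro i hi
        rw [← mul_assoc, ← mul_assoc, h i (by simp at hi; omega)]
      _ = F := by rw [hsum, mul_one]
  apply key
  intro j hj
  rw [sub_mul, sub_mul, one_mul, mul_assoc D, mul_assoc X, mul_assoc _ (T' m), hT m le_rfl j hj]
  rcases hj.lt_or_eq with h | h
  · rw [if_neg (by omega), mul_zero, hXT j h, hDT j hj, hDT (j+1) h, mul_add, mul_add, hXW j hj,
      hWT j h, ← mul_assoc X (T j) v, ← mul_assoc X (X * T j) u, hXT j h]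
    push_cast
    noncomm_ring
  · subst h
    rw [if_pos rfl, mul_one, hDT j le_rfl, mul_add, mul_add, hXW j le_rfl, hXm, Finset.mul_sum]
    have e1 : ∑ i ∈ range (j+1), D * (T i * b i) = ∑ i ∈ range (j+1), W * T i * b i
        + ∑ i ∈ range (j+1), T i * (v * b i) + ∑ i ∈ range (j+1), X * T i * (u * b i) := by
      rw [← Finset.sum_add_distrib, ← Finset.sum_add_distrib]
      apply Finset.sum_congr rfl
      intro i hi
      rw [← mul_assoc, hDT i (by simp at hi; omega)]
      noncomm_ring
    have e2 : X * ((∑ i ∈ range (j+1), T i * b i) * u) = ∑ i ∈ range (j+1), X * T i * (b i * u) := by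
      rw [Finset.sum_mul, Finset.mul_sum]
      apply Finset.sum_congr rfl
      intro i hi
      noncomm_ring
    have e3 : X * (T j * v) = ∑ i ∈ range (j+1), T i * (b i * v) := by
      rw [← mul_assoc, hXm, Finset.sum_mul]
      simp only [mul_assoc]
    have e4 : ∑ i ∈ range (j+1), W * T i * b i =
        ∑ i ∈ range (j+1), T i * (if i < j then ((i+1 : ℕ) : A) * b (i+1) else 0) := by
      rw [Finset.sum_range_succ', Finset.sum_range_succ, hW0]
      simp only [zero_mul, add_zero, lt_irrefl, if_false, mul_zero]
      apply Finset.sum_congr rfl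
      intro i hi
      simp at hi
      rw [hWT i hi, if_pos hi, Nat.cast_comm, mul_assoc]
    have e5 : ((j:A) * T j + T j) = ∑ i ∈ range (j+1), T i * (if i = j then ((j+1 : ℕ) : A) else 0) := by
      rw [Finset.sum_range_succ, Finset.sum_eq_zero]
      · rw [if_pos rfl, Nat.cast_comm]; push_cast; noncomm_ring
      · intro i hi
        simp at hi
        rw [if_neg (by omega), mul_zero]
    rw [e1, e2, e3, e4, hsumX, hsumX]
    have : ∀ a b c d e f : A, a + b + c - (d + e + f) - T j = a + b + c - e - f - (d + T j) := by
      intros; abel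
    rw [this, e5, ← Finset.sum_add_distrib, ← Finset.sum_add_distrib, ← Finset.sum_sub_distrib,
      ← Finset.sum_sub_distrib, ← Finset.sum_sub_distrib]
    apply Finset.sum_congr rfl
    intro i hi
    split_ifs <;> noncomm_ring
end alg

theorem cc_scalar (n i w wm wp s t : ℝ) (hn : 1 ≤ n) (hi0 : 0 ≤ i) (hi : i ≤ n) (hw : 0 ≤ w)
    (hwm : 0 ≤ wm) (hwp : 0 ≤ wp) (hs : 0 ≤ s) (ht : 0 ≤ t)
    (h1 : w^2 = 3*n^2 - i^2) (h2 : wm^2 = 3*n^2-(i-1)^2) (h3 : wp^2 = 3*n^2-(i+1)^2) :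
    (w*s+wm*t)^2 + (w*t+wp*s)^2 ≤ (2*w*(1-1/(24*n^2)))^2*(s^2+t^2) := by
  have hW : 2*n^2 ≤ w^2 := by nlinarith
  have hn2 : 1 ≤ n^2 := by nlinarith
  have hsum : w*(wm+wp) ≤ 2*w^2-1 := by
    apply abs_le_of_sq_le_sq' _ (by nlinarith) |>.2
    have : (wm+wp)^2 ≤ 4*w^2-4 := by nlinarith [sq_nonneg (wm-wp)]
    calc (w*(wm+wp))^2 = w^2*(wm+wp)^2 := by ring
      _ ≤ w^2*(4*w^2-4) := by gcongr
      _ ≤ _ := by nlinarith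
  have hcross : 2*i*(t^2-s^2) ≤ (2*w^2-1)*(t-s)^2 + (s^2+t^2) := by
    have hp : 3*n^2 ≤ 2*w^2-1 := by nlinarith
    have : 2*i^2 ≤ 2*w^2-1 := by nlinarith
    nlinarith [sq_nonneg (2*i*(t-s) - (t+s)), sq_nonneg (t+s), sq_nonneg (t-s), mul_nonneg (sub_nonneg.2 this) (sq_nonneg (t-s)), sq_nonneg (i*(t-s)*2 - (t+s))]
  have hfin : 4*w^2-1 ≤ (2*w*(1-1/(24*n^2)))^2 := by
    have hw3 : w^2 ≤ 3*n^2 := by nlinarith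
    have : w^2*(1/(24*n^2)) ≤ 1/8 := by
      rw [mul_one_div, div_le_iff₀ (by positivity)]; linarith
    nlinarith [sq_nonneg (w*(1/(24*n^2)))]
  calc _ = (w^2+wp^2)*s^2 + (w^2+wm^2)*t^2 + 2*(w*(wm+wp))*(s*t) := by ring
    _ ≤ (w^2+wp^2)*s^2 + (w^2+wm^2)*t^2 + 2*(2*w^2-1)*(s*t) := by gcongr
    _ = 2*(2*w^2-1)*(s^2+t^2) - (2*w^2-1)*(t-s)^2 + 2*i*(t^2-s^2) := by rw [h2, h3, h1]; ring
    _ ≤ (4*w^2-1)*(s^2+t^2) := by linarith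
    _ ≤ _ := by gcongr

section
variable {H : Type*} [NormedAddCommGroup H] [InnerProductSpace ℂ H] [CompleteSpace H]
open ContinuousLinearMap

theorem cc_block (a c F B C : H →L[ℂ] H) (ha : star a * a = 1) (hc : star c * c = 1)
    (hac : star a * c = 0) (hs : a * star a + c * star c = 1) (w wm wp K : ℝ) (hK : 0 ≤ K)
    (hF : ‖F‖ ≤ w) (hB : ‖B‖ ≤ wm) (hC : ‖C‖ ≤ wp)
    (hsc : ∀ s t : ℝ, 0 ≤ s → 0 ≤ t → (w*s+wm*t)^2 + (w*t+wp*s)^2 ≤ (2*K)^2*(s^2+t^2)) :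
    ‖(1/2:ℂ) • (a * F * star a + c * F * star c + c * C * star a + a * B * star c)‖ ≤ K := by
  have hn : ∀ y z : H, ‖a y + c z‖^2 = ‖y‖^2 + ‖z‖^2 := by
    intro y z
    have h1 : ∀ y, (star a) (a y) = y := fun y => by rw [← mul_apply_eq_comp, ha]; rfl
    have h2 : ∀ y, (star c) (c y) = y := fun y => by rw [← mul_apply_eq_comp, hc]; rfl
    have h3 : ∀ y, (star a) (c y) = 0 := fun y => by rw [← mul_apply_eq_comp, hac]; rfl
    have h1' : ‖a y‖^2 = ‖y‖^2 := by
      rw [← inner_self_eq_norm_sq (𝕜 := ℂ), ← inner_self_eq_norm_sq (𝕜 := ℂ) y, ← adjoint_inner_left, ← star_eq_adjoint, h1]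
    have h2' : ‖c z‖^2 = ‖z‖^2 := by
      rw [← inner_self_eq_norm_sq (𝕜 := ℂ), ← inner_self_eq_norm_sq (𝕜 := ℂ) z, ← adjoint_inner_left, ← star_eq_adjoint, h2]
    have h3' : inner ℂ (a y) (c z) = 0 := by
      rw [← adjoint_inner_right, ← star_eq_adjoint, h3, inner_zero_right]
    rw [norm_add_sq (𝕜 := ℂ), h1', h2', h3']; simp
  refine opNorm_le_bound _ hK fun x => ?_
  set y := (star a) x
  set z := (star c) x
  have hx : x = a y + c z := by
    have := congrArg (fun L : H →L[ℂ] H => L x) hs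
    simpa using this.symm
  have hnx : ‖x‖^2 = ‖y‖^2+‖z‖^2 := by rw [← hn, ← hx]
  have e : ((1/2:ℂ) • (a * F * star a + c * F * star c + c * C * star a + a * B * star c)) x
      = (1/2:ℂ) • (a (F y + B z) + c (F z + C y)) := by
    simp only [smul_apply, add_apply, map_add]
    congr 1
    change a (F y) + c (F z) + c (C y) + a (B z) = _
    abel
  rw [e, norm_smul]
  have b1 : ‖F y + B z‖ ≤ w*‖y‖ + wm*‖z‖ :=
    (norm_add_le _ _).trans (add_le_add (le_of_opNorm_le _ hF _) (le_of_opNorm_le _ hB _))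
  have b2 : ‖F z + C y‖ ≤ w*‖z‖ + wp*‖y‖ :=
    (norm_add_le _ _).trans (add_le_add (le_of_opNorm_le _ hF _) (le_of_opNorm_le _ hC _))
  have : ‖a (F y + B z) + c (F z + C y)‖ ≤ 2*K*‖x‖ := by
    apply abs_le_of_sq_le_sq' _ (by positivity) |>.2
    rw [hn]
    calc _ ≤ (w*‖y‖ + wm*‖z‖)^2 + (w*‖z‖ + wp*‖y‖)^2 := by gcongr
      _ ≤ _ := hsc _ _ (norm_nonneg _) (norm_nonneg _)
      _ = _ := by rw [← hnx]; ring
  have h2 : ‖(1/2:ℂ)‖ = 1/2 := by norm_num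
  rw [h2]
  linarith

theorem cc_exists (hH : ¬ FiniteDimensional ℂ H) : ∃ a c : H →L[ℂ] H,
    star a * a = 1 ∧ star c * c = 1 ∧ star a * c = 0 ∧ a * star a + c * star c = 1 := by
  classical
  obtain ⟨s, b, hb⟩ := exists_hilbertBasis ℂ H
  have hinf : Infinite s := by
    by_contra h
    rw [not_infinite_iff_finite] at h
    have := Fintype.ofFinite s
    exact hH (Module.Basis.finiteDimensional_of_finite (b.toOrthonormalBasis.toBasis))
  have hcard : Nonempty (s ⊕ s ≃ s) := by
    rw [← Cardinal.eq, Cardinal.mk_sum]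
    simp [Cardinal.add_eq_self (Cardinal.aleph0_le_mk s)]
  obtain ⟨e⟩ := hcard
  have hmk : ∀ g : s → s, Function.Injective g → ∃ a : H →L[ℂ] H, star a * a = 1 ∧ ∀ i, a (b i) = b (g i) := by
    intro g hg
    have ho : Orthonormal ℂ (fun i => b (g i)) := b.orthonormal.comp g hg
    let L : H →ₗᵢ[ℂ] H := (ho.orthogonalFamily.linearIsometry).comp b.repr.toLinearIsometry
    refine ⟨L.toContinuousLinearMap, ?_, ?_⟩
    · rw [star_eq_adjoint]
      exact (norm_map_iff_adjoint_comp_self _).1 (fun x => L.norm_map x)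
    · intro i
      change ho.orthogonalFamily.linearIsometry (b.repr (b i)) = b (g i)
      rw [b.repr_self, OrthogonalFamily.linearIsometry_apply_single]
      simp
  obtain ⟨a, ha, ha'⟩ := hmk (fun i => e (Sum.inl i)) (fun i j h => by simpa using h)
  obtain ⟨c, hc, hc'⟩ := hmk (fun i => e (Sum.inr i)) (fun i j h => by simpa using h)
  have hext : ∀ P Q : H →L[ℂ] H, (∀ i, P (b i) = Q (b i)) → P = Q := by
    intro P Q h
    refine ContinuousLinearMap.ext_on (s := Set.range b) ?_ ?_
    · have := b.dense_span
      rw [Submodule.dense_iff_topologicalClosure_eq_top]; exact this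
    · rintro _ ⟨i, rfl⟩; exact h i
  have hac : star a * c = 0 := by
    apply hext
    intro i
    have : ∀ x, x = 0 ↔ ∀ j, inner ℂ (b j) x = 0 := by
      intro x
      constructor
      · rintro rfl; simp
      · intro h
        apply b.repr.injective
        ext j
        rw [b.repr_apply_apply, h]; simp
    show (star a) (c (b i)) = 0
    rw [this]
    intro j
    rw [star_eq_adjoint, adjoint_inner_right, ha', hc', b.orthonormal.2]
    simp
  have hca : star c * a = 0 := by
    have := congrArg star hac
    simpa using this
  refine ⟨a, c, ha, hc, hac, ?_⟩
  apply hext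
  intro i
  obtain ⟨j, rfl⟩ := e.surjective i
  rcases j with j | j
  · rw [← ha' j, ← mul_apply_eq_comp, add_mul, mul_assoc, ha, mul_assoc, hca]; simp
  · rw [← hc' j, ← mul_apply_eq_comp, add_mul, mul_assoc, hac, mul_assoc, hc]; simp
end

section iter
variable {A : Type*} [CStarAlgebra A]

noncomputable def ccB (a c : A) (l : ℝ) (f : ℕ → A) (i : ℕ) : A :=
  ((1/(2*l) : ℝ) : ℂ) • (a * f i + c * f (i+1))

noncomputable def ccE (a c : A) (f : ℕ → A) (i : ℕ) : A :=
  (1/2 : ℂ) • (a * f i * star a + c * f i * star c + c * f (i+1) * star a + a * f (i-1) * star c)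

noncomputable def ccU (c : A) (l : ℝ) : A := (l : ℂ) • star c

noncomputable def ccF (m : ℕ) (a c : A) (l : ℝ) (f : ℕ → A) (i : ℕ) : A :=
  if 1 ≤ i ∧ i ≤ m then
    ccE a c f i - ((i+1 : ℕ) : A) * ccB a c l f (i+1)
      - ccB a c l f i * (ccU c l * ccB a c l f m - ccB a c l f m * ccU c l)
      + (if i = m then ((m+1 : ℕ) : A) else 0)
  else 0

noncomputable def ccw (m : ℕ) (i : ℕ) : ℝ := Real.sqrt (3*((m:ℝ)+1)^2 - (i:ℝ)^2)

theorem cc_comm (a c : A) (ha : star a * a = 1) (hc : star c * c = 1)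
    (hac : star a * c = 0) (hca : star c * a = 0) (l : ℝ) (hl : 0 < l) (f : ℕ → A) (i : ℕ) (hi : 1 ≤ i) :
    (ccU a l * ccB a c l f i - ccB a c l f i * ccU a l)
      + (ccU c l * ccB a c l f (i-1) - ccB a c l f (i-1) * ccU c l) = f i - ccE a c f i := by
  obtain ⟨k, rfl⟩ : ∃ k, i = k+1 := ⟨i-1, by omega⟩
  have h2 : (l:ℂ) * ((1/(2*l) : ℝ) : ℂ) = 1/2 := by
    push_cast
    have : (l:ℂ) ≠ 0 := by exact_mod_cast hl.ne'
    field_simp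
  have h3 : ((1/(2*l) : ℝ) : ℂ) * (l:ℂ) = 1/2 := by rw [mul_comm, h2]
  simp only [ccU, ccB, ccE, smul_mul_smul_comm, h2, h3, add_tsub_cancel_right, mul_add, add_mul,
    ← mul_assoc, ha, hc, hac, hca, one_mul, zero_mul]
  module

theorem ccw_le (m i : ℕ) : ccw m i ≤ 2*((m:ℝ)+1) := by
  unfold ccw
  apply Real.sqrt_le_iff.2 ⟨by positivity, by nlinarith [sq_nonneg (i:ℝ), sq_nonneg ((m:ℝ)+1)]⟩

theorem le_ccw (m i : ℕ) (hi : i ≤ m) : (m:ℝ)+1 ≤ ccw m i := by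
  unfold ccw
  apply Real.le_sqrt_of_sq_le
  have : (i:ℝ) ≤ m := by exact_mod_cast hi
  have : (i:ℝ)^2 ≤ m^2 := by gcongr
  nlinarith [(Nat.cast_nonneg m : (0:ℝ) ≤ m)]

theorem ccB_sub (a c : A) (l : ℝ) (f g : ℕ → A) (i : ℕ) :
    ccB a c l f i - ccB a c l g i = ccB a c l (fun i => f i - g i) i := by
  simp only [ccB, mul_sub]; module

theorem ccE_sub (a c : A) (f g : ℕ → A) (i : ℕ) :
    ccE a c f i - ccE a c g i = ccE a c (fun i => f i - g i) i := by
  simp only [ccE, mul_sub, sub_mul]; module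

theorem ccB_norm (m : ℕ) (a c : A) (ha : ‖a‖ ≤ 1) (hc : ‖c‖ ≤ 1) (l : ℝ) (hl : 0 < l) (f : ℕ → A)
    (d : ℝ) (hd : 0 ≤ d) (hf : ∀ i, ‖f i‖ ≤ d * ccw m i) (i : ℕ) :
    ‖ccB a c l f i‖ ≤ 2*((m:ℝ)+1)*d/l := by
  have h : ∀ i, ‖f i‖ ≤ d * (2*((m:ℝ)+1)) := fun i => (hf i).trans (by gcongr; exact ccw_le m i)
  have h2 : ‖a * f i + c * f (i+1)‖ ≤ 1*(d * (2*((m:ℝ)+1))) + 1*(d * (2*((m:ℝ)+1))) := by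
    refine (norm_add_le _ _).trans (add_le_add ?_ ?_)
    · exact (norm_mul_le _ _).trans (mul_le_mul ha (h _) (norm_nonneg _) zero_le_one)
    · exact (norm_mul_le _ _).trans (mul_le_mul hc (h _) (norm_nonneg _) zero_le_one)
  rw [ccB, norm_smul, Complex.norm_real, Real.norm_of_nonneg (by positivity)]
  calc _ ≤ 1/(2*l) * (1*(d * (2*((m:ℝ)+1))) + 1*(d * (2*((m:ℝ)+1)))) := by gcongr
    _ = _ := by field_simp; ring

theorem ccU_norm (c : A) (hc : ‖c‖ ≤ 1) (l : ℝ) (hl : 0 < l) : ‖ccU c l‖ ≤ l := by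
  rw [ccU, norm_smul, Complex.norm_real, Real.norm_of_nonneg hl.le, norm_star]
  nlinarith

theorem cc_comm_norm (x y : A) (p q : ℝ) (hp : ‖x‖ ≤ p) (hq : ‖y‖ ≤ q) : ‖x*y-y*x‖ ≤ 2*p*q := by
  have h0 := norm_nonneg x
  have h1 := norm_nonneg y
  have h2 : ‖x*y‖ ≤ p*q := (norm_mul_le _ _).trans (by gcongr; linarith)
  have h3 : ‖y*x‖ ≤ q*p := (norm_mul_le _ _).trans (by gcongr; linarith)
  linarith [norm_sub_le (x*y) (y*x)]

theorem cc_lip [Nontrivial A] (m : ℕ) (a c : A) (ha : ‖a‖ ≤ 1) (hc : ‖c‖ ≤ 1) (l R : ℝ)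
    (hR : R = 48*((m:ℝ)+1)^2) (hl : l = 40000*((m:ℝ)+1)^5)
    (hE : ∀ (f : ℕ → A) (d : ℝ), 0 ≤ d → (∀ i, ‖f i‖ ≤ d * ccw m i) → ∀ i, 1 ≤ i → i ≤ m →
      ‖ccE a c f i‖ ≤ (1-1/(24*((m:ℝ)+1)^2)) * (d * ccw m i))
    (f g : ℕ → A) (hf : ∀ i, ‖f i‖ ≤ R * ccw m i) (hg : ∀ i, ‖g i‖ ≤ R * ccw m i)
    (d : ℝ) (hd : 0 ≤ d) (hfg : ∀ i, ‖f i - g i‖ ≤ d * ccw m i) (i : ℕ) :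
    ‖ccF m a c l f i - ccF m a c l g i‖ ≤ (1-1/(48*((m:ℝ)+1)^2)) * (d * ccw m i) := by
  have hm0 : (0:ℝ) ≤ m := Nat.cast_nonneg m
  set n : ℝ := (m:ℝ)+1 with hn
  have hn1 : 1 ≤ n := by linarith
  have hl0 : 0 < l := by rw [hl]; positivity
  have hR0 : 0 < R := by rw [hR]; positivity
  have hw0 : 0 ≤ ccw m i := Real.sqrt_nonneg _
  by_cases hi : 1 ≤ i ∧ i ≤ m
  swap
  · simp only [ccF, if_neg hi, sub_zero, norm_zero]
    have : 1/(48*n^2) ≤ 1 := by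
      rw [div_le_one (by positivity)]; nlinarith
    have : 0 ≤ 1 - 1/(48*n^2) := by linarith
    positivity
  simp only [ccF, if_pos hi]
  have e : ∀ p q r s p2 q2 r2 : A, p - q - r + s - (p2 - q2 - r2 + s) = (p-p2) - (q-q2) - (r-r2) := by
    intros; abel
  rw [e, ccE_sub, ← mul_sub, ccB_sub]
  have h1 := hE _ d hd hfg i hi.1 hi.2
  have h2 : ‖((i+1:ℕ):A) * ccB a c l (fun i => f i - g i) (i+1)‖ ≤ n * (2*n*d/l) := by
    refine (norm_mul_le _ _).trans (mul_le_mul ?_ (ccB_norm m a c ha hc l hl0 _ d hd hfg _) (norm_nonneg _) (by positivity))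
    refine (Nat.norm_cast_le _).trans ?_
    rw [norm_one, mul_one, hn]
    have : (i:ℝ) ≤ m := by exact_mod_cast hi.2
    push_cast; linarith
  have h3 : ‖ccB a c l f i * (ccU c l * ccB a c l f m - ccB a c l f m * ccU c l) -
      ccB a c l g i * (ccU c l * ccB a c l g m - ccB a c l g m * ccU c l)‖ ≤
      (2*n*d/l)*(2*l*(2*n*R/l)) + (2*n*R/l)*(2*l*(2*n*d/l)) := by
    have e : ∀ x y x2 y2 u : A, x * (u*y-y*u) - x2 * (u*y2-y2*u) =
      (x-x2)*(u*y-y*u) + x2*(u*(y-y2) - (y-y2)*u) := by intros; noncomm_ring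
    rw [e, ccB_sub, ccB_sub]
    refine (norm_add_le _ _).trans (add_le_add ?_ ?_)
    · refine (norm_mul_le _ _).trans (mul_le_mul (ccB_norm m a c ha hc l hl0 _ d hd hfg _) ?_ (norm_nonneg _) (by positivity))
      exact cc_comm_norm _ _ _ _ (ccU_norm c hc l hl0) (ccB_norm m a c ha hc l hl0 _ R hR0.le hf _)
    · refine (norm_mul_le _ _).trans (mul_le_mul (ccB_norm m a c ha hc l hl0 _ R hR0.le hg _) ?_ (norm_nonneg _) (by positivity))
      exact cc_comm_norm _ _ _ _ (ccU_norm c hc l hl0) (ccB_norm m a c ha hc l hl0 _ d hd hfg _)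
  have h4 : n * (2*n*d/l) + ((2*n*d/l)*(2*l*(2*n*R/l)) + (2*n*R/l)*(2*l*(2*n*d/l))) ≤ 1/(48*n^2) * (d * n) := by
    have : n * (2*n*d/l) + ((2*n*d/l)*(2*l*(2*n*R/l)) + (2*n*R/l)*(2*l*(2*n*d/l))) = d*n*((2*n+16*n*R)/l) := by
      field_simp; ring
    rw [this, mul_comm, mul_comm d n]
    have : (2*n+16*n*R)/l ≤ 1/(48*n^2) := by
      rw [div_le_div_iff₀ hl0 (by positivity), hl, hR]
      have : n^3 ≤ n^5 := pow_le_pow_right₀ hn1 (by norm_num)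
      nlinarith
    nlinarith [mul_le_mul_of_nonneg_left this (by positivity : 0 ≤ d*n)]
  have h5 : 1/(48*n^2) * (d * n) ≤ 1/(48*n^2) * (d * ccw m i) := by
    gcongr; exact le_ccw m i hi.2
  have h6 : (1-1/(48*n^2)) * (d * ccw m i) = (1-1/(24*n^2)) * (d * ccw m i) + 1/(48*n^2) * (d * ccw m i) := by
    field_simp; ring
  rw [h6]
  refine (norm_sub_le _ _).trans ?_
  have := norm_sub_le (ccE a c (fun i => f i - g i) i) (((i+1:ℕ):A) * ccB a c l (fun i => f i - g i) (i+1))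
  linarith

theorem cc_zero [Nontrivial A] (m : ℕ) (a c : A) (l : ℝ) (i : ℕ) :
    ‖ccF m a c l (fun _ => 0) i‖ ≤ ccw m i := by
  unfold ccF ccE ccB
  have hw0 : 0 ≤ ccw m i := Real.sqrt_nonneg _
  simp only [mul_zero, zero_mul, add_zero, smul_zero, sub_zero, zero_add]
  split_ifs with h h'
  · refine (Nat.norm_cast_le _).trans ?_
    rw [norm_one, mul_one]
    push_cast
    exact le_ccw m i h.2
  · simpa
  · simpa

/-- approximate fixed point -/
theorem cc_fix [Nontrivial A] (m : ℕ) (a c : A) (ha : ‖a‖ ≤ 1) (hc : ‖c‖ ≤ 1) (l R : ℝ)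
    (hR : R = 48*((m:ℝ)+1)^2) (hl : l = 40000*((m:ℝ)+1)^5)
    (hE : ∀ (f : ℕ → A) (d : ℝ), 0 ≤ d → (∀ i, ‖f i‖ ≤ d * ccw m i) → ∀ i, 1 ≤ i → i ≤ m →
      ‖ccE a c f i‖ ≤ (1-1/(24*((m:ℝ)+1)^2)) * (d * ccw m i)) (δ : ℝ) (hδ : 0 < δ) :
    ∃ f : ℕ → A, (∀ i, ‖f i‖ ≤ R * ccw m i) ∧ (∀ i, ¬ (1 ≤ i ∧ i ≤ m) → f i = 0) ∧
      ∀ i, ‖f i - ccF m a c l f i‖ ≤ δ := by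
  have hm0 : (0:ℝ) ≤ m := Nat.cast_nonneg m
  have hR0 : 0 ≤ R := by rw [hR]; positivity
  have hw0 : ∀ i, 0 ≤ ccw m i := fun i => Real.sqrt_nonneg _
  set q : ℝ := 1-1/(48*((m:ℝ)+1)^2) with hq
  have hqR : 1 + q * R = R := by
    rw [hq, hR]; field_simp; ring
  have hq1 : q < 1 := by
    have : 0 < 1/(48*((m:ℝ)+1)^2) := by positivity
    linarith
  have hq0 : 0 ≤ q := by
    have : 1/(48*((m:ℝ)+1)^2) ≤ 1 := by
      rw [div_le_one (by positivity)]; nlinarith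
    linarith
  have main : ∀ k : ℕ, ∃ f : ℕ → A, (∀ i, ‖f i‖ ≤ R * ccw m i) ∧ (∀ i, ¬ (1 ≤ i ∧ i ≤ m) → f i = 0) ∧
      (∀ i, ‖ccF m a c l f i‖ ≤ R * ccw m i) ∧
      ∀ i, ‖f i - ccF m a c l f i‖ ≤ q^k * ccw m i := by
    have step : ∀ f : ℕ → A, (∀ i, ‖f i‖ ≤ R * ccw m i) → ∀ i, ‖ccF m a c l f i‖ ≤ R * ccw m i := by
      intro f hf i
      have h1 := cc_lip m a c ha hc l R hR hl hE f (fun _ => 0) hf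
        (fun i => by simpa using mul_nonneg hR0 (hw0 i)) R hR0 (fun i => by simpa using hf i) i
      have h2 := cc_zero m a c l i
      have h3 : ‖ccF m a c l f i‖ ≤ ‖ccF m a c l f i - ccF m a c l (fun _ => 0) i‖ + ‖ccF m a c l (fun _ => 0) i‖ := by
        simpa using norm_add_le (ccF m a c l f i - ccF m a c l (fun _ => 0) i) (ccF m a c l (fun _ => 0) i)
      calc _ ≤ q * (R * ccw m i) + ccw m i := by linarith
        _ = (1+q*R) * ccw m i := by ring
        _ = _ := by rw [hqR]
    intro k
    induction k with
    | zero =>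
      have h0 : ∀ i, ‖(0:A)‖ ≤ R * ccw m i := fun i => by simpa using mul_nonneg hR0 (hw0 i)
      refine ⟨fun _ => 0, h0, fun _ _ => rfl, step _ h0, fun i => ?_⟩
      simpa using cc_zero m a c l i
    | succ k ih =>
      obtain ⟨f, h1, h2, h3, h4⟩ := ih
      refine ⟨ccF m a c l f, h3, fun i hi => by rw [ccF, if_neg hi], step _ h3, fun i => ?_⟩
      have := cc_lip m a c ha hc l R hR hl hE f _ h1 h3 (q^k) (by positivity) h4 i
      rw [pow_succ']
      linarith
  obtain ⟨k, hk⟩ := exists_pow_lt_of_lt_one (show 0 < δ / (2*((m:ℝ)+1)) by positivity) hq1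
  obtain ⟨f, h1, h2, h3, h4⟩ := main k
  refine ⟨f, h1, h2, fun i => (h4 i).trans ?_⟩
  calc _ ≤ δ / (2*((m:ℝ)+1)) * (2*((m:ℝ)+1)) :=
        mul_le_mul hk.le (ccw_le m i) (hw0 i) (by positivity)
    _ = δ := by field_simp

end iter

section asm
variable {A : Type*} [CStarAlgebra A]

theorem cc_norm_le_one [Nontrivial A] (s : A) (h : star s * s = 1) : ‖s‖ ≤ 1 := by
  have := CStarRing.norm_star_mul_self (x := s)
  rw [h, norm_one] at this
  nlinarith [norm_nonneg s]

noncomputable def ccS (m : ℕ) (a c : A) (i : ℕ) : A := if i < m then c^i * a else c^m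

theorem ccS_orth (m : ℕ) (a c : A) (ha : star a * a = 1) (hc : star c * c = 1)
    (hac : star a * c = 0) (i j : ℕ) (hi : i ≤ m) (hj : j ≤ m) :
    star (ccS m a c i) * ccS m a c j = if i = j then 1 else 0 := by
  have hcp : ∀ k, star (c^k) * c^k = 1 := by
    intro k
    induction k with
    | zero => simp
    | succ k ih => rw [pow_succ, star_mul, mul_assoc, ← mul_assoc (star (c^k)), ih, one_mul, hc]
  have hlt : ∀ i j : ℕ, i < j → j ≤ m → star (ccS m a c i) * ccS m a c j = 0 := by
    intro i j hij hj
    obtain ⟨k, rfl⟩ : ∃ k, j = i + 1 + k := ⟨j - i - 1, by omega⟩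
    have : ∀ y, star (c^i * a) * (c^(i+1+k) * y) = 0 := by
      intro y
      calc star (c^i * a) * (c^(i+1+k) * y) = star a * (star (c^i) * c^i) * c * c^k * y := by
            rw [pow_add, pow_add, pow_one, star_mul]; simp only [mul_assoc]
        _ = 0 := by rw [hcp, mul_one, hac]; simp
    rw [ccS, if_pos (by omega), ccS]
    split_ifs with h
    · exact this a
    · have := this 1
      rw [mul_one] at this
      rw [show m = i+1+k by omega]; exact this
  rcases lt_trichotomy i j with h | h | h
  · rw [if_neg (by omega), hlt i j h hj]
  · subst h
    rw [if_pos rfl, ccS]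
    split_ifs
    · rw [star_mul, mul_assoc, ← mul_assoc (star (c^i)), hcp, one_mul, ha]
    · exact hcp m
  · rw [if_neg (by omega)]
    have := congrArg star (hlt j i h hi)
    simpa using this

theorem ccS_sum (m : ℕ) (a c : A) (hs : a * star a + c * star c = 1) :
    ∑ i ∈ range (m+1), ccS m a c i * star (ccS m a c i) = 1 := by
  have h : ∀ m : ℕ, ∑ i ∈ range m, (c^i * a) * star (c^i * a) + c^m * star (c^m) = 1 := by
    intro m
    induction m with
    | zero => simp
    | succ k ih =>
      rw [Finset.sum_range_succ, add_assoc]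
      have : c^k * a * star (c^k * a) + c^(k+1) * star (c^(k+1)) = c^k * (a * star a + c * star c) * star (c^k) := by
        rw [pow_succ]; simp only [star_mul]; noncomm_ring
      rw [this, hs, mul_one, ih]
  rw [Finset.sum_range_succ, ← h m]
  congr 1
  · apply Finset.sum_congr rfl
    intro i hi
    rw [ccS, if_pos (by simpa using hi)]
  · simp [ccS]

theorem cc_main [Nontrivial A] (m : ℕ) (hm : 1 ≤ m) (a c : A) (ha : star a * a = 1) (hc : star c * c = 1)
    (hac : star a * c = 0) (hs : a * star a + c * star c = 1)
    (hE : ∀ (f : ℕ → A) (d : ℝ), 0 ≤ d → (∀ i, ‖f i‖ ≤ d * ccw m i) → ∀ i, 1 ≤ i → i ≤ m →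
      ‖ccE a c f i‖ ≤ (1-1/(24*((m:ℝ)+1)^2)) * (d * ccw m i)) (δ : ℝ) (hδ : 0 < δ) :
    ∃ D X : A, ‖D * X - X * D - 1‖ ≤ 385*((m:ℝ)+1)^3 * (2^m)⁻¹ + m * δ ∧
      ‖D‖ * ‖X‖ ≤ 1400000 * ((m:ℝ)+1)^5 := by
  have hca : star c * a = 0 := by
    have := congrArg star hac
    simpa using this
  have ha1 := cc_norm_le_one a ha
  have hc1 := cc_norm_le_one c hc
  have hm0 : (1:ℝ) ≤ m := by exact_mod_cast hm
  set n : ℝ := (m:ℝ)+1 with hn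
  have hn1 : 1 ≤ n := by linarith
  obtain ⟨R, hR⟩ : ∃ R, R = 48*n^2 := ⟨_, rfl⟩
  obtain ⟨l, hl⟩ : ∃ l, l = 40000*n^5 := ⟨_, rfl⟩
  have hl0 : 0 < l := by rw [hl]; positivity
  have hR0 : 0 ≤ R := by rw [hR]; positivity
  obtain ⟨f, hf1, hf2, hf3⟩ := cc_fix m a c ha1 hc1 l R hR hl hE δ hδ
  set β : ℝ := 2*n*R/l with hβ
  have hb : ∀ i, ‖ccB a c l f i‖ ≤ β := ccB_norm m a c ha1 hc1 l hl0 f R hR0 hf1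
  have hlβ : l * β = 96*n^3 := by rw [hβ, hR]; field_simp; ring
  have hβ0 : 0 ≤ β := by positivity
  have hβn : n * β ≤ 1 := by
    have : n*β = 96*n^4/l := by rw [hβ, hR]; field_simp; ring
    rw [this, div_le_one hl0, hl]
    have : n^4 ≤ n^5 := pow_le_pow_right₀ hn1 (by norm_num)
    nlinarith [pow_pos (by linarith : 0 < n) 5]
  have hβ1 : β ≤ 1 := by nlinarith
  let S := ccS m a c
  have hS := fun i hi j hj => ccS_orth m a c ha hc hac i j hi hj
  have hSs : ∑ i ∈ range (m+1), S i * star (S i) = 1 := ccS_sum m a c hs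
  have hSn : ∀ i ≤ m, ‖S i‖ ≤ 1 := fun i hi => cc_norm_le_one _ (by rw [hS i hi i hi, if_pos rfl])
  let T : ℕ → A := fun i => (2:ℂ)^i • S i
  let T' : ℕ → A := fun i => ((2:ℂ)^i)⁻¹ • star (S i)
  have hT : ∀ i ≤ m, ∀ j ≤ m, T' i * T j = if i = j then 1 else 0 := by
    intro i hi j hj
    simp only [T, T', smul_mul_smul_comm]
    rw [hS i hi j hj]
    split_ifs with h
    · subst h; rw [inv_mul_cancel₀ (pow_ne_zero _ two_ne_zero), one_smul]
    · simp
  have hTT' : ∀ i y, T i * y * T' i = S i * y * star (S i) := by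
    intro i y
    simp only [T, T', smul_mul_assoc, mul_smul_comm, smul_smul]
    rw [inv_mul_cancel₀ (pow_ne_zero _ two_ne_zero), one_smul]
  have hTs : ∑ i ∈ range (m+1), T i * T' i = 1 := by
    rw [← hSs]
    apply Finset.sum_congr rfl
    intro i _
    simpa using hTT' i 1
  have hTn : ∀ i ≤ m, ‖T i‖ ≤ 2^i := by
    intro i hi
    simp only [T, norm_smul, norm_pow, Complex.norm_ofNat]
    have := hSn i hi
    nlinarith [pow_pos (two_pos : (0:ℝ) < 2) i]
  have hTn' : ∀ i ≤ m, ‖T' i‖ ≤ (2^i)⁻¹ := by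
    intro i hi
    simp only [T', norm_smul, norm_inv, norm_pow, Complex.norm_ofNat, norm_star]
    have := hSn i hi
    nlinarith [inv_pos.2 (pow_pos (two_pos : (0:ℝ) < 2) i)]
  have hterm : ∀ i ≤ m, ∀ (y : A) (p : ℝ), ‖y‖ ≤ p → ‖T i * y * T' m‖ ≤ 2^i * p * (2^m)⁻¹ := by
    intro i hi y p hp
    have hp0 := (norm_nonneg y).trans hp
    refine (norm_mul_le _ _).trans (mul_le_mul ((norm_mul_le _ _).trans ?_) (hTn' m le_rfl) (norm_nonneg _) (by positivity))
    exact mul_le_mul (hTn i hi) hp (norm_nonneg _) (by positivity)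
  have hterm' : ∀ i ≤ m, ∀ (y : A) (p : ℝ), ‖y‖ ≤ p → ‖T i * y * T' m‖ ≤ p := by
    intro i hi y p hp
    have hp0 := (norm_nonneg y).trans hp
    refine (hterm i hi y p hp).trans ?_
    have : (2:ℝ)^i ≤ 2^m := pow_le_pow_right₀ (by norm_num) hi
    rw [← div_eq_mul_inv, div_le_iff₀ (by positivity)]
    nlinarith
  obtain ⟨Wd, hW⟩ : ∃ W, W = ∑ i ∈ range m, ((i+1 : ℕ) : A) * T i * T' (i+1) := ⟨_, rfl⟩
  obtain ⟨X, hX⟩ : ∃ X, X = (∑ i ∈ range m, T (i+1) * T' i) + (∑ i ∈ range (m+1), T i * ccB a c l f i) * T' m := ⟨_, rfl⟩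
  obtain ⟨Pu, hu⟩ : ∃ P, P = ∑ i ∈ range (m+1), T i * ccU c l * T' i := ⟨_, rfl⟩
  obtain ⟨Pv, hv⟩ : ∃ P, P = ∑ i ∈ range (m+1), T i * ccU a l * T' i := ⟨_, rfl⟩
  have halg := cc_alg hT hTs (ccU c l) (ccU a l) (ccB a c l f) X (Wd + Pv + X * Pu) Wd Pu Pv hX hW hu hv rfl
  refine ⟨Wd + Pv + X * Pu, X, ?_, ?_⟩
  · rw [halg, Finset.sum_mul, Finset.sum_range_succ', add_comm]
    refine (norm_add_le _ _).trans (add_le_add ?_ ?_)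
    · refine (hterm 0 (by omega) _ (385*n^3) ?_).trans (by simp)
      rw [if_pos (by omega), if_neg (by omega), if_neg (by omega)]
      simp only [zero_add, Nat.cast_one, one_mul, add_zero, sub_zero]
      have h1 := hb 1
      have h2 := cc_comm_norm _ _ _ _ (ccU_norm a ha1 l hl0) (hb 0)
      have h3 : ‖ccB a c l f 0 * (ccU c l * ccB a c l f m - ccB a c l f m * ccU c l)‖ ≤ 1 * (2*l*β) :=
        (norm_mul_le _ _).trans (mul_le_mul ((hb 0).trans hβ1)
          (cc_comm_norm _ _ _ _ (ccU_norm c hc1 l hl0) (hb m)) (norm_nonneg _) zero_le_one)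
      refine (norm_add_le _ _).trans ?_
      have h4 := norm_add_le (ccB a c l f 1) (ccU a l * ccB a c l f 0 - ccB a c l f 0 * ccU a l)
      have h5 : 1 ≤ n^3 := one_le_pow₀ hn1
      nlinarith
    · refine (norm_sum_le _ _).trans ?_
      calc _ ≤ ∑ i ∈ range m, δ := by
            apply Finset.sum_le_sum
            intro i hi
            simp only [Finset.mem_range] at hi
            refine hterm' (i+1) hi _ δ ?_
            refine le_trans (le_of_eq ?_) (hf3 (i+1))
            congr 1
            have hF : ∀ x y : A, (if 1 ≤ i+1 ∧ i+1 ≤ m then x else y) = x :=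
              fun x y => if_pos ⟨by omega, hi⟩
            have hcomm := cc_comm a c ha hc hac hca l hl0 f (i+1) (by omega)
            have hH : ∀ x y : A, (if 1 ≤ i+1 then x else y) = x := fun x y => if_pos (by omega)
            have h9 : (if i + 1 < m then ((i+1+1 : ℕ) : A) * ccB a c l f (i+1+1) else 0)
                = ((i+1+1 : ℕ) : A) * ccB a c l f (i+1+1) := by
              by_cases h : i + 1 < m
              · rw [if_pos h]
              · have h0 : ccB a c l f (i+1+1) = 0 := by
                  rw [ccB, hf2 _ (by omega), hf2 _ (by omega)]; simp
                rw [if_neg h, h0, mul_zero]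
            have hass : ∀ p q r s t : A, p + q + r + s - t = p + (q + r) + s - t := by
              intros; abel
            rw [ccF, hF, hH, h9, hass, hcomm]
            abel
        _ = m * δ := by simp
  · have hN : ‖∑ i ∈ range m, T (i+1) * T' i‖ ≤ 4 := by
      have e : ∑ i ∈ range m, T (i+1) * T' i = (2:ℂ) • ∑ i ∈ range m, S (i+1) * star (S i) := by
        rw [Finset.smul_sum]
        apply Finset.sum_congr rfl
        intro i _
        simp only [T, T', smul_mul_smul_comm]
        congr 1
        rw [pow_succ]; field_simp
      have e2 : (∑ i ∈ range m, S (i+1) * star (S i)) * star (∑ i ∈ range m, S (i+1) * star (S i))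
          = 1 - S 0 * star (S 0) := by
        rw [← hSs, Finset.sum_range_succ' (fun i => S i * star (S i)), add_sub_cancel_right, star_sum, Finset.sum_mul]
        apply Finset.sum_congr rfl
        intro i hi
        simp only [Finset.mem_range] at hi
        rw [Finset.mul_sum, Finset.sum_eq_single i]
        · rw [star_mul, star_star, mul_assoc, ← mul_assoc (star (S i)), hS i hi.le i hi.le, if_pos rfl, one_mul]
        · intro j hj hji
          simp only [Finset.mem_range] at hj
          rw [star_mul, star_star, mul_assoc, ← mul_assoc (star (S i)), hS i hi.le j hj.le, if_neg (Ne.symm hji)]; simp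
        · intro h; simp at h; omega
      have e3 := CStarRing.norm_self_mul_star (x := ∑ i ∈ range m, S (i+1) * star (S i))
      have e4 : ‖1 - S 0 * star (S 0)‖ ≤ 2 := by
        refine (norm_sub_le _ _).trans ?_
        have := (norm_mul_le (S 0) (star (S 0)))
        rw [norm_star] at this
        rw [norm_one]
        nlinarith [hSn 0 (by omega), norm_nonneg (S 0)]
      rw [e2] at e3
      rw [e, norm_smul, Complex.norm_ofNat]
      nlinarith [norm_nonneg (∑ i ∈ range m, S (i+1) * star (S i))]
    have hXn : ‖X‖ ≤ 5 := by
      rw [hX]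
      refine (norm_add_le _ _).trans ?_
      have : ‖(∑ i ∈ range (m+1), T i * ccB a c l f i) * T' m‖ ≤ 1 := by
        rw [Finset.sum_mul]
        refine (norm_sum_le _ _).trans ?_
        calc _ ≤ ∑ i ∈ range (m+1), β := by
              apply Finset.sum_le_sum
              intro i hi
              simp only [Finset.mem_range] at hi
              exact hterm' i (by omega) _ β (hb i)
          _ = n * β := by simp [hn]
          _ ≤ 1 := hβn
      linarith
    have hWn : ‖Wd‖ ≤ n^2 := by
      rw [hW]
      refine (norm_sum_le _ _).trans ?_
      calc _ ≤ ∑ i ∈ range m, n := by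
            apply Finset.sum_le_sum
            intro i hi
            simp only [Finset.mem_range] at hi
            have h1 : ‖((i+1 : ℕ) : A)‖ ≤ n := by
              refine (Nat.norm_cast_le _).trans ?_
              rw [norm_one, mul_one, hn]
              exact_mod_cast (by omega : i+1 ≤ m+1)
            have h2 : ‖T i‖ * ‖T' (i+1)‖ ≤ 1 := by
              calc _ ≤ (2:ℝ)^i * (2^(i+1))⁻¹ := mul_le_mul (hTn i hi.le) (hTn' (i+1) hi) (norm_nonneg _) (by positivity)
                _ = 1/2 := by rw [pow_succ]; field_simp
                _ ≤ 1 := by norm_num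
            rw [mul_assoc]
            calc _ ≤ ‖((i+1 : ℕ) : A)‖ * (‖T i‖ * ‖T' (i+1)‖) :=
                  (norm_mul_le _ _).trans (by gcongr; exact norm_mul_le _ _)
              _ ≤ n * 1 := by gcongr
              _ = n := mul_one n
        _ = m * n := by simp
        _ ≤ n^2 := by nlinarith
    have hamp : ∀ y : A, star y * y = 1 → ‖∑ i ∈ range (m+1), T i * ccU y l * T' i‖ ≤ l := by
      intro y hy
      have e : ∑ i ∈ range (m+1), T i * ccU y l * T' i = (l:ℂ) • star (∑ i ∈ range (m+1), S i * y * star (S i)) := by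
        rw [star_sum, Finset.smul_sum]
        apply Finset.sum_congr rfl
        intro i _
        rw [hTT', ccU, star_mul, star_mul, star_star]
        simp only [smul_mul_assoc, mul_smul_comm, mul_assoc]
      rw [e, norm_smul, norm_star, Complex.norm_real, Real.norm_of_nonneg hl0.le]
      have : ‖∑ i ∈ range (m+1), S i * y * star (S i)‖ ≤ 1 := by
        apply cc_norm_le_one
        rw [star_sum, Finset.sum_mul, ← hSs]
        apply Finset.sum_congr rfl
        intro i hi
        simp only [Finset.mem_range] at hi
        rw [Finset.mul_sum, Finset.sum_eq_single i]
        · have h1 := hS i (by omega) i (by omega)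
          rw [if_pos rfl] at h1
          calc _ = S i * (star y * (star (S i) * S i) * y) * star (S i) := by
                simp only [star_mul, star_star, mul_assoc]
            _ = _ := by rw [h1, mul_one, hy, mul_one]
        · intro j hj hji
          simp only [Finset.mem_range] at hj
          have h1 := hS i (by omega) j (by omega)
          rw [if_neg (Ne.symm hji)] at h1
          calc _ = S i * (star y * (star (S i) * S j) * y) * star (S j) := by
                simp only [star_mul, star_star, mul_assoc]
            _ = _ := by rw [h1]; simp
        · intro h; simp at h; omega
      nlinarith
    have hPu : ‖Pu‖ ≤ l := by rw [hu]; exact hamp c hc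
    have hPv : ‖Pv‖ ≤ l := by rw [hv]; exact hamp a ha
    have hDn : ‖Wd + Pv + X * Pu‖ ≤ 7*l := by
      refine (norm_add_le _ _).trans ?_
      have h1 := norm_add_le Wd Pv
      have h2 : ‖X * Pu‖ ≤ 5 * l := (norm_mul_le _ _).trans (mul_le_mul hXn hPu (norm_nonneg _) (by norm_num))
      have h3 : n^2 ≤ l := by
        have : n^2 ≤ n^5 := pow_le_pow_right₀ hn1 (by norm_num)
        rw [hl]; nlinarith [pow_pos (by linarith : 0 < n) 5]
      linarith
    calc _ ≤ (7*l) * 5 := mul_le_mul hDn hXn (norm_nonneg _) (by positivity)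
      _ = _ := by rw [hl]; ring
end asm

theorem cc_hE {H : Type*} [NormedAddCommGroup H] [InnerProductSpace ℂ H] [CompleteSpace H]
    (a c : H →L[ℂ] H) (ha : star a * a = 1) (hc : star c * c = 1)
    (hac : star a * c = 0) (hs : a * star a + c * star c = 1) (m : ℕ)
    (f : ℕ → H →L[ℂ] H) (d : ℝ) (hd : 0 ≤ d) (hf : ∀ i, ‖f i‖ ≤ d * ccw m i) (i : ℕ) (hi1 : 1 ≤ i) (him : i ≤ m) :
    ‖ccE a c f i‖ ≤ (1-1/(24*((m:ℝ)+1)^2)) * (d * ccw m i) := by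
  have hm0 : (0:ℝ) ≤ m := Nat.cast_nonneg m
  have hi1' : (1:ℝ) ≤ i := by exact_mod_cast hi1
  have him' : (i:ℝ) ≤ m := by exact_mod_cast him
  have hw0 : ∀ i, 0 ≤ ccw m i := fun i => Real.sqrt_nonneg _
  have hw2 : ∀ j : ℕ, (j:ℝ) ≤ m+1 → ccw m j ^ 2 = 3*((m:ℝ)+1)^2 - (j:ℝ)^2 := by
    intro j hj
    apply Real.sq_sqrt
    nlinarith [(Nat.cast_nonneg j : (0:ℝ) ≤ j)]
  have hq0 : 0 ≤ 1-1/(24*((m:ℝ)+1)^2) := by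
    have : 1/(24*((m:ℝ)+1)^2) ≤ 1 := by
      rw [div_le_one (by positivity)]; nlinarith
    linarith
  apply cc_block a c _ _ _ ha hc hac hs (d * ccw m i) (d * ccw m (i-1)) (d * ccw m (i+1)) _
    (mul_nonneg hq0 (mul_nonneg hd (hw0 i))) (hf _) (hf _) (hf _)
  intro s t hs ht
  have hpred : ((i-1 : ℕ) : ℝ) = i - 1 := by push_cast [hi1]; ring
  have := cc_scalar ((m:ℝ)+1) i (ccw m i) (ccw m (i-1)) (ccw m (i+1)) s t (by linarith) (by linarith)
    (by linarith) (hw0 _) (hw0 _) (hw0 _) hs ht (hw2 _ (by linarith))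
    (by rw [hw2 _ (by rw [hpred]; linarith), hpred])
    (by rw [hw2 _ (by push_cast; linarith)]; push_cast; ring)
  have := mul_le_mul_of_nonneg_left this (sq_nonneg d)
  calc _ = d^2 * ((ccw m i * s + ccw m (i-1) * t)^2 + (ccw m i * t + ccw m (i+1) * s)^2) := by ring
    _ ≤ _ := this
    _ = _ := by ring

/-- Main theorem: on an infinite dimensional Hilbert space, for every `0 < ε ≤ 1/2` there exist
`D, X` with `‖[D,X] - 1‖ ≤ ε` and `‖D‖‖X‖ = O(log⁵(1/ε))`. -/
theorem commutators_close_to_identity : ∃ C : ℝ, 0 < C ∧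
    ∀ (H : Type) [NormedAddCommGroup H] [InnerProductSpace ℂ H] [CompleteSpace H],
      ¬ FiniteDimensional ℂ H → ∀ ε : ℝ, 0 < ε → ε ≤ 1 / 2 →
        ∃ D X : H →L[ℂ] H, ‖D * X - X * D - 1‖ ≤ ε ∧
          ‖D‖ * ‖X‖ ≤ C * Real.log (1 / ε) ^ 5 := by
  refine ⟨1400000 * 164^5, by positivity, ?_⟩
  intro H _ _ _ hH ε hε hε2
  have hnt : Nontrivial H := by
    by_contra h
    rw [not_nontrivial_iff_subsingleton] at h
    exact hH inferInstance
  obtain ⟨a, c, ha, hc, hac, hs⟩ := cc_exists hH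
  set L := Real.log (1/ε) with hL
  have hlog2 : (1/2:ℝ) < Real.log 2 := by linarith [Real.log_two_gt_d9]
  have hL2 : Real.log 2 ≤ L := by
    apply Real.log_le_log (by norm_num)
    rw [le_div_iff₀ hε]; linarith
  obtain ⟨k, hkdef⟩ : ∃ k : ℕ, k = ⌈2*L⌉₊ := ⟨_, rfl⟩
  have hk1 : 2*L ≤ k := by rw [hkdef]; exact Nat.le_ceil _
  have hk2 : (k:ℝ) ≤ 2*L + 1 := by rw [hkdef]; exact (Nat.ceil_lt_add_one (by linarith)).le
  have hk0 : (1:ℝ) ≤ k := by linarith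
  have hk0' : 1 ≤ k := by exact_mod_cast hk0
  have h2k : 1/ε ≤ 2^k := by
    rw [← Real.log_le_log_iff (by positivity) (by positivity), Real.log_pow, ← hL]
    nlinarith
  obtain ⟨m, hm⟩ : ∃ m, m = 40*k := ⟨_, rfl⟩
  have hmr : (m:ℝ) = 40*k := by rw [hm]; push_cast; ring
  obtain ⟨D, X, h1, h2⟩ := cc_main m (by omega) a c ha hc hac hs (cc_hE a c ha hc hac hs m)
    (ε/(2*m)) (by rw [hmr]; positivity)
  refine ⟨D, X, h1.trans ?_, h2.trans ?_⟩
  · have e1 : (m:ℝ) * (ε/(2*m)) = ε/2 := by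
      rw [hmr]; field_simp
    have e2 : 10*((m:ℝ)+1) ≤ 2^(13*k) := by
      have := one_add_mul_le_pow (show (-2:ℝ) ≤ 8191 by norm_num) k
      rw [pow_mul, hmr]
      norm_num at this ⊢
      linarith
    have e3 : 1000*((m:ℝ)+1)^3 ≤ 2^(39*k) := by
      calc 1000*((m:ℝ)+1)^3 = (10*((m:ℝ)+1))^3 := by ring
        _ ≤ (2^(13*k))^3 := by gcongr
        _ = _ := by rw [← pow_mul]; congr 1; ring
    have e4 : (2:ℝ)^m = 2^k * 2^(39*k) := by rw [← pow_add, hm]; congr 1; ring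
    have e5 : 1 ≤ ε * 2^k := by
      rwa [div_le_iff₀ hε, mul_comm] at h2k
    have e6 : 385*((m:ℝ)+1)^3 * (2^m)⁻¹ ≤ ε/2 := by
      rw [← div_eq_mul_inv, div_le_iff₀ (by positivity), e4]
      have : (2:ℝ)^(39*k) * 1 ≤ 2^(39*k) * (ε * 2^k) := by gcongr
      have : (0:ℝ) ≤ ((m:ℝ)+1)^3 := by positivity
      nlinarith
    linarith
  · have hn : (m:ℝ)+1 ≤ 164*L := by rw [hmr]; linarith
    calc 1400000 * ((m:ℝ)+1)^5 ≤ 1400000 * (164*L)^5 := by gcongr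
      _ = _ := by ring
end
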